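/- Assume: ‖H‖ ≤ K_H; |f1 - f0 - ⟨g, η⟩ - (1/2)⟨A η, η⟩| ≤ (L_H/2)‖η‖³; ‖G - g‖ ≤ δ_g; ‖(H - A) η‖ ≤ δ_H ‖η‖; σ ≥ 2 L_H; δ_g ≤ 9 δ_H² / (4σ); there is a unit vector u ∈ E with ⟨u, H u⟩ ≤ ν λ_min(H) < 0 and ⟨G, u⟩ ≤ 0, and η^E := t* u where t* ≥ 0 is a global minimizer of t ↦ m(t u) over t ≥ 0; m(η) ≤ m(η^E); λ_min(H) < -ε_H; and δ_H ≤ min{1/9, 2(1-ρ_TH)/9} · ν ε_H. Then f0 - f1 ≥ ρ_TH · (-m(η)), i.e., the acceptance ratio ρ = (f0 - f1)/(-m(η)) satisfies ρ ≥ ρ_TH. (Lemma 3.3, case (b).) -/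

import Mathlib

open RealInnerProductSpace

/-!
Write `s = ‖η‖` and suppose `u` is a unit direction along which the model Hessian has curvature at
most `-κ`. The step of length `κ / σ` along `u` already lowers the cubic model by `κ³ / (6σ²)`, so
the predicted decrease `-m(η)` is at least that much. The true decrease falls short of the predicted
one by at most `δ_g s + δ_H s² / 2 - σ s³ / 12`: since `σ ≥ 2L`, the Taylor remainder uses up at
most three quarters of the regularization term `σ s³ / 3`, and the remaining quarter, together with
`δ_g ≤ 9δ_H² / (4σ)`, keeps this shortfall below `18δ_H³ / σ²` whatever the length of the step. For
small `δ_H / κ` this is at most `1 - ρ` times the predicted decrease.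
-/

section CubicModel

variable {E : Type*} [NormedAddCommGroup E] [InnerProductSpace ℝ E]

/-- The second-order model of the change of an objective along a step `ξ`, with gradient `G` and
Hessian `H`. It is used both for the exact derivatives and for their approximations, and `H` need
not be symmetric. -/
noncomputable def quadraticModel (G : E) (H : E →ₗ[ℝ] E) (ξ : E) : ℝ :=
  ⟪G, ξ⟫ + (1 / 2) * ⟪H ξ, ξ⟫

/-- The cubic-regularized model whose approximate minimizer is taken as the step; the value of the
objective at the current point is left out, so that it vanishes at `ξ = 0`. -/
noncomputable def cubicModel (G : E) (H : E →ₗ[ℝ] E) (σ : ℝ) (ξ : E) : ℝ :=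
  quadraticModel G H ξ + (σ / 3) * ‖ξ‖ ^ 3

variable {G g u η : E} {H A : E →ₗ[ℝ] E} {σ κ : ℝ}

theorem quadraticModel_smul (G : E) (H : E →ₗ[ℝ] E) (t : ℝ) (ξ : E) :
    quadraticModel G H (t • ξ) = t * ⟪G, ξ⟫ + t ^ 2 / 2 * ⟪H ξ, ξ⟫ := by
  simp only [quadraticModel, map_smul, real_inner_smul_left, real_inner_smul_right]
  ring

theorem cubicModel_smul_le_of_curvature_le (hu : ‖u‖ = 1) (hGu : ⟪G, u⟫ ≤ 0)
    (hcurv : ⟪H u, u⟫ ≤ -κ) {t : ℝ} (ht : 0 ≤ t) :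
    cubicModel G H σ (t • u) ≤ σ / 3 * t ^ 3 - κ / 2 * t ^ 2 := by
  have slope : t * ⟪G, u⟫ ≤ 0 := mul_nonpos_of_nonneg_of_nonpos ht hGu
  have curvature : t ^ 2 / 2 * ⟪H u, u⟫ ≤ t ^ 2 / 2 * -κ := by gcongr
  rw [cubicModel, quadraticModel_smul, norm_smul, Real.norm_of_nonneg ht, hu, mul_one]
  linarith

-- `κ / σ` is the minimizer over `t ≥ 0` of the bound in `cubicModel_smul_le_of_curvature_le`.
theorem cubicModel_div_smul_le_of_curvature_le (hσ : 0 < σ) (hκ : 0 ≤ κ) (hu : ‖u‖ = 1)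
    (hGu : ⟪G, u⟫ ≤ 0) (hcurv : ⟪H u, u⟫ ≤ -κ) :
    cubicModel G H σ ((κ / σ) • u) ≤ -(κ ^ 3 / (6 * σ ^ 2)) :=
  calc
    cubicModel G H σ ((κ / σ) • u) ≤ σ / 3 * (κ / σ) ^ 3 - κ / 2 * (κ / σ) ^ 2 :=
      cubicModel_smul_le_of_curvature_le hu hGu hcurv (by positivity)
    _ = -(κ ^ 3 / (6 * σ ^ 2)) := by
      field_simp
      ring

theorem quadraticModel_sub_le {δ_g δ_H : ℝ} (hg : ‖G - g‖ ≤ δ_g)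
    (hH : ‖H η - A η‖ ≤ δ_H * ‖η‖) :
    quadraticModel g A η - quadraticModel G H η ≤ δ_g * ‖η‖ + δ_H / 2 * ‖η‖ ^ 2 := by
  have gradient_error : ⟪g - G, η⟫ ≤ δ_g * ‖η‖ :=
    (real_inner_le_norm _ _).trans (by rw [norm_sub_rev]; gcongr)
  have hessian_error : ⟪A η - H η, η⟫ ≤ δ_H * ‖η‖ * ‖η‖ :=
    (real_inner_le_norm _ _).trans (by rw [norm_sub_rev]; gcongr)
  rw [inner_sub_left] at gradient_error hessian_error
  simp only [quadraticModel]
  linarith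

theorem cubic_error_le {σ δ s : ℝ} (hσ : 0 < σ) (hδ : 0 ≤ δ) (hs : 0 ≤ s) :
    9 * δ ^ 2 / (4 * σ) * s + δ / 2 * s ^ 2 - σ / 12 * s ^ 3 ≤ 18 * δ ^ 3 / σ ^ 2 := by
  -- With `3` in place of `9 / 4`, the gap would have a double root at `s = 6 * δ / σ`.
  have gap : 18 * δ ^ 3 / σ ^ 2 - (9 * δ ^ 2 / (4 * σ) * s + δ / 2 * s ^ 2 - σ / 12 * s ^ 3) =
      ((σ * s - 6 * δ) ^ 2 * (σ * s + 6 * δ) / 12 + 3 / 4 * δ ^ 2 * (σ * s)) / σ ^ 2 := by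
    field_simp
    ring
  rw [← sub_nonneg, gap]
  positivity

theorem sub_sub_cubicModel_le {f₀ f₁ L δ : ℝ} (hσ : 0 < σ) (hδ : 0 ≤ δ) (hL : 2 * L ≤ σ)
    (hTaylor : f₁ - f₀ - quadraticModel g A η ≤ L / 2 * ‖η‖ ^ 3)
    (hg : ‖G - g‖ ≤ 9 * δ ^ 2 / (4 * σ)) (hH : ‖H η - A η‖ ≤ δ * ‖η‖) :
    f₁ - f₀ - cubicModel G H σ η ≤ 18 * δ ^ 3 / σ ^ 2 := by
  have remainder : L / 2 * ‖η‖ ^ 3 ≤ σ / 4 * ‖η‖ ^ 3 :=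
    mul_le_mul_of_nonneg_right (by linarith) (by positivity)
  have model_error := quadraticModel_sub_le hg hH
  refine le_trans ?_ (cubic_error_le hσ hδ (norm_nonneg η))
  rw [cubicModel]
  linarith

theorem eighteen_mul_pow_three_le {δ κ θ : ℝ} (hδ : 0 ≤ δ) (hκ : δ ≤ 1 / 9 * κ)
    (hθ : δ ≤ 2 * θ / 9 * κ) : 18 * δ ^ 3 ≤ θ * κ ^ 3 / 6 := by
  have hθκ : 0 ≤ θ * κ := by linarith
  calc
    18 * δ ^ 3 = 18 * (δ ^ 2 * δ) := by ring
    _ ≤ 18 * ((1 / 9 * κ) ^ 2 * (2 * θ / 9 * κ)) := by gcongr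
    _ = 4 / 81 * (θ * κ * κ ^ 2) := by ring
    _ ≤ 1 / 6 * (θ * κ * κ ^ 2) :=
      mul_le_mul_of_nonneg_right (by norm_num) (by positivity)
    _ = θ * κ ^ 3 / 6 := by ring

theorem success_criterion_curvature_case_general {f₀ f₁ L δ ρ : ℝ} (hσ : 0 < σ) (hκ : 0 ≤ κ)
    (hδ : 0 ≤ δ) (hρ : ρ ≤ 1) (hL : 2 * L ≤ σ)
    (hTaylor : f₁ - f₀ - quadraticModel g A η ≤ L / 2 * ‖η‖ ^ 3)
    (hg : ‖G - g‖ ≤ 9 * δ ^ 2 / (4 * σ)) (hH : ‖H η - A η‖ ≤ δ * ‖η‖)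
    (hu : ‖u‖ = 1) (hcurv : ⟪H u, u⟫ ≤ -κ) (hGu : ⟪G, u⟫ ≤ 0)
    (hη : ∀ t : ℝ, 0 ≤ t → cubicModel G H σ η ≤ cubicModel G H σ (t • u))
    (hδκ : δ ≤ min (1 / 9) (2 * (1 - ρ) / 9) * κ) :
    f₀ - f₁ ≥ ρ * -cubicModel G H σ η := by
  have predicted_decrease : κ ^ 3 / (6 * σ ^ 2) ≤ -cubicModel G H σ η :=
    le_neg_of_le_neg <| (hη (κ / σ) (by positivity)).trans <|
      cubicModel_div_smul_le_of_curvature_le hσ hκ hu hGu hcurv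
  have accuracy : 18 * δ ^ 3 ≤ (1 - ρ) * κ ^ 3 / 6 := by
    rw [min_mul_of_nonneg _ _ hκ, le_min_iff] at hδκ
    exact eighteen_mul_pow_three_le hδ hδκ.1 hδκ.2
  have shortfall : f₁ - f₀ - cubicModel G H σ η ≤ (1 - ρ) * -cubicModel G H σ η :=
    calc
      f₁ - f₀ - cubicModel G H σ η ≤ 18 * δ ^ 3 / σ ^ 2 :=
        sub_sub_cubicModel_le hσ hδ hL hTaylor hg hH
      _ ≤ (1 - ρ) * κ ^ 3 / 6 / σ ^ 2 := by gcongr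
      _ = (1 - ρ) * (κ ^ 3 / (6 * σ ^ 2)) := by field_simp
      _ ≤ (1 - ρ) * -cubicModel G H σ η :=
        mul_le_mul_of_nonneg_left predicted_decrease (sub_nonneg.2 hρ)
  linarith

end CubicModel

/-- Lemma 3.3, case (b): with large negative curvature and sufficiently accurate
gradient/Hessian approximations, the iteration is successful. -/
theorem success_criterion_curvature_case
    {E : Type*} [NormedAddCommGroup E] [InnerProductSpace ℝ E] [FiniteDimensional ℝ E]
    (G g η : E) (H A : E →L[ℝ] E) (hH : IsSelfAdjoint H) (hA : IsSelfAdjoint A)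
    (σ L_H K_H ν δ_g δ_H ε_H ρ_TH : ℝ) (hσ : 0 < σ) (hL : 0 < L_H) (hK : 0 < K_H)
    (hν : ν ∈ Set.Ioo (0 : ℝ) 1)
    (hδg : δ_g ∈ Set.Ioo (0 : ℝ) 1) (hδH : δ_H ∈ Set.Ioo (0 : ℝ) 1)
    (hεH : ε_H ∈ Set.Ioo (0 : ℝ) 1) (hρ : ρ_TH ∈ Set.Ioo (0 : ℝ) 1)
    (m : E → ℝ)
    (hm : ∀ ξ : E, m ξ = ⟪G, ξ⟫ + (1 / 2) * ⟪H ξ, ξ⟫ + (σ / 3) * ‖ξ‖ ^ 3)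
    (lammin : ℝ)
    (hlam : lammin = sInf ((fun u : E => ⟪u, H u⟫) '' {u : E | ‖u‖ = 1}))
    (f0 f1 : ℝ)
    (hHK : ‖H‖ ≤ K_H)
    (hTaylor : |f1 - f0 - ⟪g, η⟫ - (1 / 2) * ⟪A η, η⟫| ≤ (L_H / 2) * ‖η‖ ^ 3)
    (hGg : ‖G - g‖ ≤ δ_g)
    (hHa : ‖(H - A) η‖ ≤ δ_H * ‖η‖)
    (hσL : σ ≥ 2 * L_H)
    (hδgH : δ_g ≤ 9 * δ_H ^ 2 / (4 * σ))
    (u : E) (hu : ‖u‖ = 1)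
    (hcurv : ⟪u, H u⟫ ≤ ν * lammin) (hneg : ν * lammin < 0)
    (hGu : ⟪G, u⟫ ≤ 0)
    (tstar : ℝ) (ht : 0 ≤ tstar)
    (hmin : ∀ t : ℝ, 0 ≤ t → m (tstar • u) ≤ m (t • u))
    (ηE : E) (hηE : ηE = tstar • u)
    (hmη : m η ≤ m ηE)
    (hlamsmall : lammin < -ε_H)
    (hδHsmall : δ_H ≤ min (1 / 9) (2 * (1 - ρ_TH) / 9) * ν * ε_H) :
    f0 - f1 ≥ ρ_TH * (-m η) := by
  obtain rfl : m = cubicModel G H σ := funext hm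
  have curvature : ⟪H u, u⟫ ≤ -(ν * ε_H) := by
    rw [real_inner_comm]
    linarith [mul_le_mul_of_nonneg_left hlamsmall.le hν.1.le]
  exact success_criterion_curvature_case_general hσ (mul_pos hν.1 hεH.1).le hδH.1.le hρ.2.le hσL
    ((sub_add_eq_sub_sub _ _ _).trans_le ((le_abs_self _).trans hTaylor))
    (hGg.trans hδgH) hHa hu curvature hGu (fun t ht => (hηE ▸ hmη).trans (hmin t ht))
    (mul_assoc _ ν ε_H ▸ hδHsmall)
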